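/- For each ε ∈ (0,1] let ψ_ε be a smooth diffeomorphism of ℝ^m such that the nets (ψ_ε) and (ψ_ε^{−1}) are both c-bounded and moderate. Let (ξ_ε) be a moderate net of smooth complete vector fields on ℝ^m whose flows Φ_ε : ℝ × ℝ^m → ℝ^m form a c-bounded moderate net. Then for each ε the pullback vector field ψ_ε^*ξ_ε := (Dψ_ε)^{−1}·(ξ_ε ∘ ψ_ε) is a smooth complete vector field on ℝ^m whose flow is (η,x) ↦ ψ_ε^{−1}(Φ_ε(η, ψ_ε(x))), the net of these flows is again c-bounded and moderate, and (ψ_ε^*ξ_ε) is a moderate net of vector fields. Hence the pullback of a strictly 𝒢-complete generalized group action under a generalized diffeomorphism is a strictly 𝒢-complete generalized group action with generator the pullback of the generator. -/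

import Mathlib

/-!
The algebraic part is conjugation: `ψ_ε⁻¹ ∘ Φ_ε(t, ·) ∘ ψ_ε` is the identity at `t = 0`, and by the
chain rule its velocity at `y = ψ_ε⁻¹(Φ_ε(t, ψ_ε x))` is `Dψ_ε⁻¹(ψ_ε y) · ξ_ε(ψ_ε y)`.

Moderateness of the conjugated flow and of the pulled-back field is stability of moderate nets under
composition with c-bounded inner nets (`SmoothModerate.comp`), differentiation and pairing of
operators with vectors. The chain rule for higher derivatives needs the nets to be smooth, whereas
the bounds on the iterated derivatives of `Φ_ε` do not by themselves give smoothness (derivatives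
that fail to exist count as zero). Hence the substantial ingredient is `flow_contDiff`: a global flow
of a smooth vector field is jointly smooth in time and initial value.

For that, `t ↦ Φ(s t, x)` on `[0, 1]` is the zero `u` of
`u - x - s ∫₀ᵗ v(u)` in the Banach space of paths. This map is smooth because superposition
`u ↦ v ∘ u` is (`contDiff_postcomp`), and at `s = 0` its partial derivative in `u` is the identity,
so the implicit function theorem and uniqueness for ODEs make `Φ` smooth for small times
(`flow_contDiffAt_zero`). The group law carries smoothness along each trajectory to all times.
-/

open Topology Filter Set

/-- A net of smooth real-valued functions on a normed space is moderate: on each compact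
set, every iterated derivative grows at most like some negative power of `ε`. -/
def ModerateF {E : Type*} [NormedAddCommGroup E] [NormedSpace ℝ E]
    (u : ℝ → E → ℝ) : Prop :=
  ∀ K : Set E, IsCompact K → ∀ k : ℕ, ∃ p : ℕ, ∃ C > (0:ℝ), ∃ ε₀ > (0:ℝ),
    ∀ ε : ℝ, 0 < ε → ε < ε₀ → ∀ x ∈ K, ‖iteratedFDeriv ℝ k (u ε) x‖ ≤ C / ε ^ p

/-- A net of maps into `ℝ^n` is moderate if each component is moderate. -/
def ModerateV {E : Type*} [NormedAddCommGroup E] [NormedSpace ℝ E] {n : ℕ}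
    (u : ℝ → E → (Fin n → ℝ)) : Prop :=
  ∀ i : Fin n, ModerateF (fun ε x => u ε x i)

/-- A net of maps is c-bounded: each compact set is mapped into a fixed compact set
for small `ε`. -/
def CBoundedMap {X Y : Type*} [TopologicalSpace X] [TopologicalSpace Y]
    (u : ℝ → X → Y) : Prop :=
  ∀ K : Set X, IsCompact K → ∃ ε₀ > (0:ℝ), ∃ K' : Set Y, IsCompact K' ∧
    ∀ ε : ℝ, 0 < ε → ε < ε₀ → ∀ x ∈ K, u ε x ∈ K'

/-! ### Smoothness of global flows -/

/-- Pointwise application of a path of operators to a path of vectors, as a bounded bilinear map. -/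
noncomputable def pathApply (K E F : Type*) [TopologicalSpace K] [CompactSpace K]
    [NormedAddCommGroup E] [NormedSpace ℝ E] [NormedAddCommGroup F] [NormedSpace ℝ F] :
    C(K, E →L[ℝ] F) →L[ℝ] C(K, E) →L[ℝ] C(K, F) :=
  LinearMap.mkContinuous₂
    (LinearMap.mk₂ ℝ (fun (A : C(K, E →L[ℝ] F)) (h : C(K, E)) =>
        (⟨fun t => A t (h t), by fun_prop⟩ : C(K, F)))
      (fun _ _ _ => by ext; simp) (fun _ _ _ => by ext; simp)
      (fun _ _ _ => by ext; simp) (fun _ _ _ => by ext; simp))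
    1 (fun A h => by
      rw [ContinuousMap.norm_le _ (by positivity)]
      intro t
      rw [one_mul]
      exact (ContinuousLinearMap.le_opNorm _ _).trans
        (by
          gcongr
          exacts [A.norm_coe_le_norm t, h.norm_coe_le_norm t]))

theorem pathApply_apply {K E F : Type*} [TopologicalSpace K] [CompactSpace K]
    [NormedAddCommGroup E] [NormedSpace ℝ E] [NormedAddCommGroup F] [NormedSpace ℝ F]
    (A : C(K, E →L[ℝ] F)) (h : C(K, E)) (t : K) : pathApply K E F A h t = A t (h t) := rfl

/-- Superposition `u ↦ v ∘ u` on paths over a compact space is differentiable: the mean value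
inequality applies pointwise, and it is uniform because `w ↦ v' ∘ w` is continuous in the
compact-open topology. -/
theorem hasFDerivAt_postcomp {K E F : Type*} [TopologicalSpace K] [CompactSpace K]
    [NormedAddCommGroup E] [NormedSpace ℝ E] [NormedAddCommGroup F] [NormedSpace ℝ F]
    (v : C(E, F)) (v' : C(E, E →L[ℝ] F)) (hv : ∀ x, HasFDerivAt v (v' x) x) (u : C(K, E)) :
    HasFDerivAt (fun u : C(K, E) => v.comp u) (pathApply K E F (v'.comp u)) u := by
  rw [hasFDerivAt_iff_isLittleO_nhds_zero, Asymptotics.isLittleO_iff]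
  intro c hc
  have hcont : Tendsto (fun w : C(K, E) => v'.comp w) (𝓝 u) (𝓝 (v'.comp u)) :=
    (v'.continuous_postcomp (X := K)).tendsto u
  have hev : ∀ᶠ w in 𝓝 u, dist (v'.comp w) (v'.comp u) < c :=
    hcont.eventually (Metric.ball_mem_nhds (v'.comp u) hc)
  obtain ⟨δ, hδ, hball⟩ := Metric.eventually_nhds_iff.1 hev
  filter_upwards [Metric.ball_mem_nhds (0 : C(K, E)) hδ] with h hh
  rw [mem_ball_zero_iff] at hh
  rw [ContinuousMap.norm_le _ (by positivity)]
  intro t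
  have key : ‖v (u t + h t) - v (u t) - v' (u t) (u t + h t - u t)‖
      ≤ c * ‖u t + h t - u t‖ := by
    refine Convex.norm_image_sub_le_of_norm_hasFDerivWithin_le' (s := segment ℝ (u t) (u t + h t))
      (fun z _ => (hv z).hasFDerivWithinAt) ?_ (convex_segment _ _)
      (left_mem_segment _ _ _) (right_mem_segment _ _ _)
    intro z hz
    -- A point of the segment at time `t` is the value at `t` of the path `u + θ • h`.
    rw [segment_eq_image'] at hz
    obtain ⟨θ, hθ, rfl⟩ := hz
    have hw : dist (u + θ • h) u < δ := by
      rw [dist_eq_norm, add_sub_cancel_left, norm_smul, Real.norm_of_nonneg hθ.1]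
      exact (mul_le_of_le_one_left (norm_nonneg _) hθ.2).trans_lt hh
    have h1 := (ContinuousMap.dist_apply_le_dist (f := v'.comp (u + θ • h)) (g := v'.comp u) t).trans
      (hball hw).le
    rw [dist_eq_norm] at h1
    simpa using h1
  calc _ = ‖v (u t + h t) - v (u t) - v' (u t) (u t + h t - u t)‖ := by
        simp [pathApply_apply]
    _ ≤ c * ‖u t + h t - u t‖ := key
    _ ≤ c * ‖h‖ := by
        rw [add_sub_cancel_left]
        exact mul_le_mul_of_nonneg_left (h.norm_coe_le_norm t) hc.le

universe u in
/-- Superposition by a smooth map is `C^n`, by induction on `n`: its derivative is `pathApply`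
composed with superposition by `fderiv ℝ v`, which is why the target space varies. -/
theorem contDiff_postcomp {K : Type*} [TopologicalSpace K] [CompactSpace K] {E : Type u}
    [NormedAddCommGroup E] [NormedSpace ℝ E] (n : ℕ) :
    ∀ {F : Type u} [NormedAddCommGroup F] [NormedSpace ℝ F] (v : C(E, F)),
      ContDiff ℝ (⊤ : ℕ∞) v → ContDiff ℝ n (fun u : C(K, E) => v.comp u) := by
  induction n with
  | zero =>
    intro F _ _ v _
    exact contDiff_zero.2 v.continuous_postcomp
  | succ n ih =>
    intro F _ _ v hv
    have hd : ContDiff ℝ (⊤ : ℕ∞) (fderiv ℝ v) := hv.fderiv_right (by simp)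
    refine contDiff_succ_iff_hasFDerivAt.2
      ⟨_, ?_, hasFDerivAt_postcomp v ⟨fderiv ℝ v, hd.continuous⟩
        (fun x => (hv.differentiable (by simp) x).hasFDerivAt)⟩
    exact (pathApply K E F).contDiff.comp (ih ⟨fderiv ℝ v, hd.continuous⟩ hd)

section Flow

variable {E : Type*} [NormedAddCommGroup E] [NormedSpace ℝ E]

/-- The primitive `t ↦ ∫₀ᵗ u` of a path on `[0, 1]`, as a function of a real upper bound. -/
noncomputable def primitive (u : C(Icc (0:ℝ) 1, E)) (t : ℝ) : E :=
  ∫ τ in (0:ℝ)..t, u (projIcc 0 1 zero_le_one τ)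

omit [NormedSpace ℝ E] in
theorem continuous_extend (u : C(Icc (0:ℝ) 1, E)) :
    Continuous fun τ => u (projIcc 0 1 zero_le_one τ) := by fun_prop

theorem hasDerivAt_primitive [CompleteSpace E] (u : C(Icc (0:ℝ) 1, E)) (t : ℝ) :
    HasDerivAt (primitive u) (u (projIcc 0 1 zero_le_one t)) t :=
  (continuous_extend u).integral_hasStrictDerivAt 0 t |>.hasDerivAt

variable (E) in
/-- Integration from `0` as a bounded operator on paths `[0, 1] → E`. -/
noncomputable def integrate [CompleteSpace E] : C(Icc (0:ℝ) 1, E) →L[ℝ] C(Icc (0:ℝ) 1, E) :=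
  LinearMap.mkContinuous
    { toFun := fun u => ⟨fun t => primitive u t, (continuous_iff_continuousAt.2 fun t =>
        (hasDerivAt_primitive u t).continuousAt).comp continuous_subtype_val⟩
      map_add' := fun u w => by
        ext t
        exact intervalIntegral.integral_add ((continuous_extend u).intervalIntegrable _ _)
          ((continuous_extend w).intervalIntegrable _ _)
      map_smul' := fun c u => by
        ext t
        exact intervalIntegral.integral_smul _ _ }
    1 (fun u => by
      rw [ContinuousMap.norm_le _ (by positivity)]
      intro t
      refine (intervalIntegral.norm_integral_le_of_norm_le_const
        (fun τ _ => u.norm_coe_le_norm _)).trans ?_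
      rw [sub_zero, abs_of_nonneg t.2.1, mul_comm]
      exact mul_le_mul_of_nonneg_right t.2.2 (norm_nonneg _))

theorem integrate_apply [CompleteSpace E] (u : C(Icc (0:ℝ) 1, E)) (t : Icc (0:ℝ) 1) :
    integrate E u t = primitive u t := rfl

variable (E) in
/-- The embedding of `E` as constant paths. -/
noncomputable def constPath : E →L[ℝ] C(Icc (0:ℝ) 1, E) :=
  LinearMap.mkContinuous
    { toFun := fun x => ContinuousMap.const _ x
      map_add' := fun _ _ => rfl
      map_smul' := fun _ _ => rfl }
    1 (fun x => by
      rw [ContinuousMap.norm_le _ (by positivity)]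
      intro t
      exact (one_mul ‖x‖).ge)

theorem constPath_apply (x : E) (t : Icc (0:ℝ) 1) : constPath E x t = x := rfl

/-- The map whose zeros `((s, x), u)` are the solutions `u : [0, 1] → E` of `u' = s • v u`,
`u 0 = x`, in integrated form. Rescaling time lets every `s` share the same path space. -/
noncomputable def odeMap [CompleteSpace E] (v : C(E, E))
    (p : (ℝ × E) × C(Icc (0:ℝ) 1, E)) : C(Icc (0:ℝ) 1, E) :=
  p.2 - constPath E p.1.2 - p.1.1 • integrate E (v.comp p.2)

theorem contDiff_odeMap [CompleteSpace E] (v : C(E, E)) (hv : ContDiff ℝ (⊤ : ℕ∞) v) (n : ℕ) :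
    ContDiff ℝ n (odeMap v) := by
  have h := (contDiff_postcomp (K := Icc (0:ℝ) 1) n v hv)
  have h1 : ContDiff ℝ n fun p : (ℝ × E) × C(Icc (0:ℝ) 1, E) => v.comp p.2 := h.comp contDiff_snd
  unfold odeMap
  have h2 := (integrate E).contDiff (n := n) |>.comp h1
  have h3 : ContDiff ℝ n fun p : (ℝ × E) × C(Icc (0:ℝ) 1, E) => constPath E p.1.2 :=
    (constPath E).contDiff.comp (contDiff_snd.comp contDiff_fst)
  exact (contDiff_snd.sub h3).sub ((contDiff_fst.comp contDiff_fst).smul h2)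

/-- At speed `s = 0` the equation for the path is trivial, so its partial derivative in the path
is the identity. -/
theorem fderiv_odeMap_inr [CompleteSpace E] (v : C(E, E)) (hv : ContDiff ℝ (⊤ : ℕ∞) v) (x : E)
    (u : C(Icc (0:ℝ) 1, E)) :
    fderiv ℝ (odeMap v) ((0, x), u) ∘L .inr ℝ (ℝ × E) C(Icc (0:ℝ) 1, E) = .id ℝ _ := by
  have h1 : HasFDerivAt (odeMap v) (fderiv ℝ (odeMap v) ((0, x), u)) ((0, x), u) :=
    ((contDiff_odeMap v hv 1).differentiable (by simp) _).hasFDerivAt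
  have h2 : HasFDerivAt (fun w : C(Icc (0:ℝ) 1, E) => (((0 : ℝ), x), w))
      (.inr ℝ (ℝ × E) C(Icc (0:ℝ) 1, E)) u := hasFDerivAt_prodMk_right _ _
  have h3 := h1.comp u h2
  have h4 : (odeMap v ∘ fun w : C(Icc (0:ℝ) 1, E) => (((0 : ℝ), x), w))
      = fun w => w - constPath E x := by
    funext w
    simp [odeMap]
  rw [h4] at h3
  exact h3.unique ((hasFDerivAt_id u).sub_const _)

variable [FiniteDimensional ℝ E]

theorem exists_lipschitzOnWith_closedBall {v : E → E} (hv : ContDiff ℝ (⊤ : ℕ∞) v) (R : ℝ) :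
    ∃ C, LipschitzOnWith C v (Metric.closedBall 0 R) := by
  have : ProperSpace E := FiniteDimensional.proper ℝ E
  have hd : Continuous (fderiv ℝ v) := hv.continuous_fderiv (by simp)
  obtain ⟨C, hC⟩ := (isCompact_closedBall (0 : E) R).exists_bound_of_continuousOn hd.continuousOn
  refine ⟨C.toNNReal, Convex.lipschitzOnWith_of_nnnorm_fderiv_le
    (fun x _ => hv.differentiable (by simp) x) (fun x hx => ?_) (convex_closedBall _ _)⟩
  exact NNReal.le_toNNReal_of_coe_le (hC x hx)

/-- Uniqueness for `u' = s • v u` on `[0, 1]`, without a global Lipschitz bound: both solutions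
stay in a common ball. -/
theorem ode_unique_Icc {v : E → E} (hv : ContDiff ℝ (⊤ : ℕ∞) v) (s : ℝ) {f g : ℝ → E}
    (hf : ∀ t ∈ Icc (0:ℝ) 1, HasDerivAt f (s • v (f t)) t)
    (hg : ∀ t ∈ Icc (0:ℝ) 1, HasDerivAt g (s • v (g t)) t) (h0 : f 0 = g 0) :
    EqOn f g (Icc 0 1) := by
  have hfc : ContinuousOn f (Icc 0 1) := fun t ht => (hf t ht).continuousAt.continuousWithinAt
  have hgc : ContinuousOn g (Icc 0 1) := fun t ht => (hg t ht).continuousAt.continuousWithinAt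
  obtain ⟨A, hA⟩ := isCompact_Icc.exists_bound_of_continuousOn hfc
  obtain ⟨B, hB⟩ := isCompact_Icc.exists_bound_of_continuousOn hgc
  obtain ⟨C, hC⟩ := exists_lipschitzOnWith_closedBall (v := fun x => s • v x)
    (contDiff_const.smul hv) (max A B)
  refine ODE_solution_unique_of_mem_Icc_right (v := fun _ x => s • v x)
    (s := fun _ => Metric.closedBall 0 (max A B)) (K := C) (fun _ _ => hC) hfc
    (fun t ht => (hf t (Ico_subset_Icc_self ht)).hasDerivWithinAt) (fun t ht => ?_) hgc
    (fun t ht => (hg t (Ico_subset_Icc_self ht)).hasDerivWithinAt) (fun t ht => ?_) h0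
  · exact mem_closedBall_zero_iff.2 ((hA t (Ico_subset_Icc_self ht)).trans (le_max_left _ _))
  · exact mem_closedBall_zero_iff.2 ((hB t (Ico_subset_Icc_self ht)).trans (le_max_right _ _))

variable {v : E → E} {Φ : ℝ × E → E}

/-- A solution of `g' = s • v g` on `[0, 1]` reaches at time `1` the time-`s` image of `g 0`. -/
theorem flow_unique (hv : ContDiff ℝ (⊤ : ℕ∞) v) (h0 : ∀ x, Φ (0, x) = x)
    (hΦ : ∀ t x, HasDerivAt (fun s => Φ (s, x)) (v (Φ (t, x))) t) (s : ℝ) {g : ℝ → E}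
    (hg : ∀ t ∈ Icc (0:ℝ) 1, HasDerivAt g (s • v (g t)) t) : g 1 = Φ (s, g 0) := by
  have hf : ∀ t ∈ Icc (0:ℝ) 1,
      HasDerivAt (fun t => Φ (s * t, g 0)) (s • v (Φ (s * t, g 0))) t := by
    intro t _
    have := (hΦ (s * t) (g 0)).scomp t ((hasDerivAt_id t).const_mul s)
    simpa [Function.comp_def] using this
  have := ode_unique_Icc hv s hg hf (by simp [h0]) (right_mem_Icc.2 zero_le_one)
  simpa using this

theorem flow_add (hv : ContDiff ℝ (⊤ : ℕ∞) v) (h0 : ∀ x, Φ (0, x) = x)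
    (hΦ : ∀ t x, HasDerivAt (fun s => Φ (s, x)) (v (Φ (t, x))) t) (s t : ℝ) (x : E) :
    Φ (t + s, x) = Φ (s, Φ (t, x)) := by
  have := flow_unique hv h0 hΦ s (g := fun r => Φ (t + s * r, x)) (fun r _ => by
    have := (hΦ (t + s * r) x).scomp r (((hasDerivAt_id r).const_mul s).const_add t)
    simpa [Function.comp_def] using this)
  simpa using this

/-- Smoothness of the flow for small times, from the implicit function theorem applied to
`odeMap`. -/
theorem flow_contDiffAt_zero (hv : ContDiff ℝ (⊤ : ℕ∞) v) (h0 : ∀ x, Φ (0, x) = x)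
    (hΦ : ∀ t x, HasDerivAt (fun s => Φ (s, x)) (v (Φ (t, x))) t) (n : ℕ) (hn : n ≠ 0) (x : E) :
    ContDiffAt ℝ n Φ (0, x) := by
  have : CompleteSpace E := FiniteDimensional.complete ℝ E
  let w : C(E, E) := ⟨v, hv.continuous⟩
  have hcd : ContDiffAt ℝ n (odeMap w) ((0, x), constPath E x) :=
    (contDiff_odeMap w hv n).contDiffAt
  have hn' : (n : WithTop ℕ∞) ≠ 0 := by exact_mod_cast hn
  have hinv : (fderiv ℝ (odeMap w) ((0, x), constPath E x) ∘L
      .inr ℝ (ℝ × E) C(Icc (0:ℝ) 1, E)).IsInvertible := by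
    rw [fderiv_odeMap_inr w hv]
    exact ⟨ContinuousLinearEquiv.refl ℝ _, rfl⟩
  have hU := hcd.contDiffAt_implicitFunction hn' hinv
  have hev := hcd.eventually_apply_implicitFunction hn' hinv
  set U := hcd.implicitFunction hn' hinv
  have heval : ContDiffAt ℝ n (fun p => U p ⟨1, right_mem_Icc.2 zero_le_one⟩) (0, x) :=
    (ContinuousMap.evalCLM (M := E) ℝ
      (⟨1, right_mem_Icc.2 zero_le_one⟩ : Icc (0:ℝ) 1)).contDiff.contDiffAt.comp (0, x) hU
  refine heval.congr_of_eventuallyEq ?_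
  filter_upwards [hev] with p hp
  obtain ⟨s, y⟩ := p
  have hz : odeMap w ((0, x), constPath E x) = 0 := by simp [odeMap]
  rw [hz] at hp
  -- The path found by the implicit function theorem, extended to real times by its own equation.
  let g : ℝ → E := fun t => y + s • primitive (w.comp (U (s, y))) t
  have hgU : ∀ t : Icc (0:ℝ) 1, U (s, y) t = g t := by
    intro t
    have := congrArg (fun u : C(Icc (0:ℝ) 1, E) => u t) hp
    simp only [odeMap, ContinuousMap.sub_apply, ContinuousMap.smul_apply, integrate_apply,
      constPath_apply, ContinuousMap.zero_apply] at this
    rw [sub_sub, sub_eq_zero] at this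
    exact this
  have hg : ∀ t ∈ Icc (0:ℝ) 1, HasDerivAt g (s • v (g t)) t := by
    intro t ht
    have h1 := ((hasDerivAt_primitive (w.comp (U (s, y))) t).const_smul s).const_add y
    rw [projIcc_of_mem zero_le_one ht, ContinuousMap.comp_apply, hgU] at h1
    exact h1
  have h1 := flow_unique hv h0 hΦ s hg
  have hg0 : g 0 = y := by simp [g, primitive]
  rw [hg0] at h1
  rw [← h1, hgU]

/-- A global flow of a smooth vector field is jointly smooth. Smoothness at `(t, x)` spreads along
the trajectory of `x` by the group law, over a time step that is locally uniform, so the set of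
good times is open and closed. -/
theorem flow_contDiff (hv : ContDiff ℝ (⊤ : ℕ∞) v) (h0 : ∀ x, Φ (0, x) = x)
    (hΦ : ∀ t x, HasDerivAt (fun s => Φ (s, x)) (v (Φ (t, x))) t) :
    ContDiff ℝ (⊤ : ℕ∞) Φ := by
  have main : ∀ n : ℕ, n ≠ 0 → ContDiff ℝ n Φ := by
    intro n hn
    rw [contDiff_iff_contDiffAt]
    rintro ⟨t₀, x⟩
    let S : Set ℝ := {t | ContDiffAt ℝ n Φ (t, x)}
    have hspread : ∀ t₁ : ℝ, ∀ᶠ t in 𝓝 t₁, ∀ᶠ t' in 𝓝 t₁, t' ∈ S → t ∈ S := by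
      intro t₁
      have hev : ∀ᶠ q in 𝓝 ((0 : ℝ), Φ (t₁, x)), ContDiffAt ℝ n Φ q :=
        (flow_contDiffAt_zero hv h0 hΦ n hn (Φ (t₁, x))).eventually (by simp)
      have hc : Tendsto (fun p : ℝ × ℝ => (p.1 - p.2, Φ (p.2, x))) (𝓝 t₁ ×ˢ 𝓝 t₁)
          (𝓝 (0, Φ (t₁, x))) := by
        rw [← nhds_prod_eq]
        have : ContinuousAt (fun p : ℝ × ℝ => (p.1 - p.2, Φ (p.2, x))) (t₁, t₁) := by
          refine (continuousAt_fst.sub continuousAt_snd).prodMk ?_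
          exact ContinuousAt.comp (f := Prod.snd) (g := fun s => Φ (s, x))
            (hΦ t₁ x).continuousAt continuousAt_snd
        simpa [ContinuousAt] using this
      refine (hc.eventually hev).curry.mono fun t ht => ht.mono fun t' h ht' => ?_
      have hfun : Φ = fun q : ℝ × E => Φ (q.1 - t', Φ (t', q.2)) := by
        funext q
        rw [← flow_add hv h0 hΦ]
        simp
      change ContDiffAt ℝ n Φ (t, x)
      rw [hfun]
      have h2 : ContDiffAt ℝ n (fun q : ℝ × E => Φ (t', q.2)) (t, x) :=
        ContDiffAt.comp (t, x) (f := fun q : ℝ × E => (t', q.2)) ht'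
          (contDiffAt_const.prodMk contDiffAt_snd)
      exact ContDiffAt.comp (t, x) (f := fun q : ℝ × E => (q.1 - t', Φ (t', q.2))) h
        ((contDiffAt_fst.sub contDiffAt_const).prodMk h2)
    have hopen : IsOpen S := by
      refine isOpen_iff_mem_nhds.2 fun t₁ h₁ => ?_
      exact (hspread t₁).mono fun t ht => ht.self_of_nhds h₁
    have hclosed : IsClosed S := by
      refine isClosed_iff_frequently.2 fun t₁ h₁ => ?_
      obtain ⟨t', ht', h⟩ := (h₁.and_eventually (hspread t₁).self_of_nhds).exists
      exact h ht'
    have hS : S = univ := IsClopen.eq_univ ⟨hclosed, hopen⟩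
      ⟨0, flow_contDiffAt_zero hv h0 hΦ n hn x⟩
    have ht₀ : t₀ ∈ S := by rw [hS]; exact mem_univ t₀
    exact ht₀
  rw [contDiff_infty]
  intro n
  exact (main (n + 1) n.succ_ne_zero).of_le (by exact_mod_cast n.le_succ)

end Flow

/-! ### Calculus of moderate nets -/

section Moderate

variable {E F G : Type*} [NormedAddCommGroup E] [NormedSpace ℝ E] [NormedAddCommGroup F]
  [NormedSpace ℝ F] [NormedAddCommGroup G] [NormedSpace ℝ G]

/-- Moderateness of a net with values in an arbitrary normed space, together with smoothness for
small `ε`. Constants are absorbed into the power of `ε⁻¹`, which is harmless as `ε → 0`. -/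
def SmoothModerate (u : ℝ → E → F) : Prop :=
  (∀ᶠ ε in 𝓝[>] (0:ℝ), ContDiff ℝ (⊤ : ℕ∞) (u ε)) ∧
  ∀ K : Set E, IsCompact K → ∀ k : ℕ, ∃ N : ℕ, ∀ᶠ ε in 𝓝[>] (0:ℝ),
    ∀ x ∈ K, ‖iteratedFDeriv ℝ k (u ε) x‖ ≤ ε⁻¹ ^ N

theorem eventually_le_inv (c : ℝ) : ∀ᶠ ε in 𝓝[>] (0:ℝ), c ≤ ε⁻¹ :=
  tendsto_inv_nhdsGT_zero.eventually_ge_atTop c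

/-- One exponent serves all derivatives up to a given order. -/
theorem SmoothModerate.exists_uniform {u : ℝ → E → F} (hu : SmoothModerate u) {K : Set E}
    (hK : IsCompact K) (n : ℕ) : ∃ N : ℕ, ∀ᶠ ε in 𝓝[>] (0:ℝ),
      ∀ i ≤ n, ∀ x ∈ K, ‖iteratedFDeriv ℝ i (u ε) x‖ ≤ ε⁻¹ ^ N := by
  choose N hN using hu.2 K hK
  refine ⟨(Finset.range (n + 1)).sup N, ?_⟩
  have h := (Finset.eventually_all (Finset.range (n + 1))).2 fun i _ => hN i
  filter_upwards [h, eventually_le_inv 1] with ε hε h1 i hi x hx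
  have hi' : i ∈ Finset.range (n + 1) := Finset.mem_range.2 (Nat.lt_succ_of_le hi)
  exact (hε i hi' x hx).trans (pow_le_pow_right₀ h1 (Finset.le_sup (f := N) hi'))

theorem SmoothModerate.fderiv {u : ℝ → E → F} (hu : SmoothModerate u) :
    SmoothModerate fun ε => _root_.fderiv ℝ (u ε) := by
  refine ⟨hu.1.mono fun ε h => h.fderiv_right (by simp), fun K hK k => ?_⟩
  obtain ⟨N, hN⟩ := hu.2 K hK (k + 1)
  exact ⟨N, hN.mono fun ε h x hx => norm_iteratedFDeriv_fderiv.trans_le (h x hx)⟩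

/-- Chain rule for moderate nets: c-boundedness of the inner net keeps the outer derivatives on a
fixed compact set, and the Faà di Bruno bound does the rest. -/
theorem SmoothModerate.comp {g : ℝ → F → G} {f : ℝ → E → F} (hg : SmoothModerate g)
    (hf : SmoothModerate f) (hb : CBoundedMap f) : SmoothModerate fun ε x => g ε (f ε x) := by
  refine ⟨by filter_upwards [hg.1, hf.1] with ε h1 h2 using h1.comp h2, fun K hK n => ?_⟩
  obtain ⟨ε₀, hε₀, K', hK', hKK'⟩ := hb K hK
  obtain ⟨A, hA⟩ := hg.exists_uniform hK' n
  obtain ⟨B, hB⟩ := hf.exists_uniform hK n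
  refine ⟨1 + A + B * n, ?_⟩
  filter_upwards [hg.1, hf.1, hA, hB, eventually_le_inv 1, eventually_le_inv (n.factorial),
    Ioo_mem_nhdsGT hε₀] with ε hgs hfs hA hB h1 hn hε x hx
  have hpow : 1 ≤ ε⁻¹ ^ B := one_le_pow₀ h1
  have key := norm_iteratedFDeriv_comp_le (n := n) hgs hfs (by exact_mod_cast le_top) x
    (C := ε⁻¹ ^ A) (D := ε⁻¹ ^ B)
    (fun i hi => hA i hi _ (hKK' ε hε.1 hε.2 x hx))
    (fun i hi0 hi => (hB i hi x hx).trans (le_self_pow₀ hpow (by omega)))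
  calc _ ≤ n.factorial * ε⁻¹ ^ A * (ε⁻¹ ^ B) ^ n := key
    _ ≤ ε⁻¹ * ε⁻¹ ^ A * (ε⁻¹ ^ B) ^ n := by gcongr
    _ = ε⁻¹ ^ (1 + A + B * n) := by rw [pow_add, pow_add, pow_one, ← pow_mul]

theorem SmoothModerate.clm_apply {A : ℝ → E → F →L[ℝ] G} {f : ℝ → E → F} (hA : SmoothModerate A)
    (hf : SmoothModerate f) : SmoothModerate fun ε x => A ε x (f ε x) := by
  refine ⟨by filter_upwards [hA.1, hf.1] with ε h1 h2 using h1.clm_apply h2, fun K hK n => ?_⟩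
  obtain ⟨M, hM⟩ := hA.exists_uniform hK n
  obtain ⟨N, hN⟩ := hf.exists_uniform hK n
  refine ⟨1 + M + N, ?_⟩
  filter_upwards [hA.1, hf.1, hM, hN, eventually_le_inv 1, eventually_le_inv
    (∑ i ∈ Finset.range (n + 1), (n.choose i : ℝ))] with ε hAs hfs hM hN h1 hc x hx
  have hpos : 0 ≤ ε⁻¹ := zero_le_one.trans h1
  calc _ ≤ ∑ i ∈ Finset.range (n + 1), (n.choose i : ℝ) * ‖iteratedFDeriv ℝ i (A ε) x‖ *
          ‖iteratedFDeriv ℝ (n - i) (f ε) x‖ :=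
        norm_iteratedFDeriv_clm_apply hAs hfs x (by exact_mod_cast le_top)
    _ ≤ ∑ i ∈ Finset.range (n + 1), (n.choose i : ℝ) * ε⁻¹ ^ M * ε⁻¹ ^ N := by
        gcongr with i hi
        · exact hM i (Nat.lt_succ_iff.1 (Finset.mem_range.1 hi)) x hx
        · exact hN (n - i) (Nat.sub_le _ _) x hx
    _ = (∑ i ∈ Finset.range (n + 1), (n.choose i : ℝ)) * ε⁻¹ ^ M * ε⁻¹ ^ N := by
        rw [Finset.sum_mul, Finset.sum_mul]
    _ ≤ ε⁻¹ * ε⁻¹ ^ M * ε⁻¹ ^ N := by gcongr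
    _ = ε⁻¹ ^ (1 + M + N) := by rw [pow_add, pow_add, pow_one]

theorem SmoothModerate.add {f g : ℝ → E → F} (hf : SmoothModerate f) (hg : SmoothModerate g) :
    SmoothModerate fun ε x => f ε x + g ε x := by
  refine ⟨by filter_upwards [hf.1, hg.1] with ε h1 h2 using h1.add h2, fun K hK n => ?_⟩
  obtain ⟨M, hM⟩ := hf.2 K hK n
  obtain ⟨N, hN⟩ := hg.2 K hK n
  refine ⟨M + N + 1, ?_⟩
  filter_upwards [hf.1, hg.1, hM, hN, eventually_le_inv 2] with ε hfs hgs hM hN h2 x hx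
  have h1 : 1 ≤ ε⁻¹ := one_le_two.trans h2
  have hadd := fun_iteratedFDeriv_add_apply (x := x) (i := n)
    (hfs.of_le (by exact_mod_cast le_top)).contDiffAt
    (hgs.of_le (by exact_mod_cast le_top)).contDiffAt
  rw [hadd]
  calc _ ≤ ε⁻¹ ^ M + ε⁻¹ ^ N := (norm_add_le _ _).trans (add_le_add (hM x hx) (hN x hx))
    _ ≤ ε⁻¹ ^ (M + N) + ε⁻¹ ^ (M + N) := by gcongr <;> omega
    _ = ε⁻¹ ^ (M + N) * 2 := by ring
    _ ≤ ε⁻¹ ^ (M + N) * ε⁻¹ := by gcongr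
    _ = ε⁻¹ ^ (M + N + 1) := (pow_succ _ _).symm

/-- A net not depending on `ε` is moderate as soon as it is smooth. -/
theorem smoothModerate_const {f : E → F} (hf : ContDiff ℝ (⊤ : ℕ∞) f) :
    SmoothModerate fun _ => f := by
  refine ⟨.of_forall fun _ => hf, fun K hK n => ?_⟩
  obtain ⟨C, hC⟩ := hK.exists_bound_of_continuousOn
    (hf.continuous_iteratedFDeriv (m := n) (by exact_mod_cast le_top)).continuousOn
  refine ⟨1, (eventually_le_inv C).mono fun ε h x hx => ?_⟩
  rw [pow_one]
  exact (hC x hx).trans h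

theorem SmoothModerate.clm_comp {f : ℝ → E → F} (hf : SmoothModerate f) (L : F →L[ℝ] G) :
    SmoothModerate fun ε x => L (f ε x) :=
  (smoothModerate_const (contDiff_const (c := L))).clm_apply hf

theorem SmoothModerate.sum {ι : Type*} (s : Finset ι) {f : ι → ℝ → E → F}
    (hf : ∀ i ∈ s, SmoothModerate (f i)) : SmoothModerate fun ε x => ∑ i ∈ s, f i ε x := by
  classical
  induction s using Finset.induction_on with
  | empty => simpa using smoothModerate_const (contDiff_const (c := (0 : F)))
  | insert i s hi ih =>
    simp only [Finset.sum_insert hi]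
    exact (hf i (Finset.mem_insert_self i s)).add
      (ih fun j hj => hf j (Finset.mem_insert_of_mem hj))

theorem SmoothModerate.moderateV {n : ℕ} {u : ℝ → E → (Fin n → ℝ)} (hu : SmoothModerate u) :
    ModerateV u := by
  intro i K hK k
  obtain ⟨N, hN⟩ := (hu.clm_comp (ContinuousLinearMap.proj (R := ℝ) i)).2 K hK k
  obtain ⟨ε₀, hε₀, h⟩ := (nhdsGT_basis (0:ℝ)).eventually_iff.1 hN
  refine ⟨N, 1, one_pos, ε₀, hε₀, fun ε hε hεε₀ x hx => ?_⟩
  rw [one_div, ← inv_pow]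
  exact h ⟨hε, hεε₀⟩ x hx

theorem ModerateV.smoothModerate {n : ℕ} {u : ℝ → E → (Fin n → ℝ)} (hu : ModerateV u)
    (hs : ∀ ε ∈ Ioc (0:ℝ) 1, ContDiff ℝ (⊤ : ℕ∞) (u ε)) : SmoothModerate u := by
  have hs' : ∀ᶠ ε in 𝓝[>] (0:ℝ), ContDiff ℝ (⊤ : ℕ∞) (u ε) := by
    filter_upwards [Ioc_mem_nhdsGT (zero_lt_one (α := ℝ))] with ε hε using hs ε hε
  have hcomp : ∀ i, SmoothModerate fun ε x => u ε x i := by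
    intro i
    refine ⟨hs'.mono fun ε h => contDiff_pi.1 h i, fun K hK k => ?_⟩
    obtain ⟨p, C, hC, ε₀, hε₀, h⟩ := hu i K hK k
    refine ⟨p + 1, ?_⟩
    filter_upwards [Ioo_mem_nhdsGT hε₀, eventually_le_inv C] with ε hε hCε x hx
    calc _ ≤ C / ε ^ p := h ε hε.1 hε.2 x hx
      _ = ε⁻¹ ^ p * C := by rw [div_eq_mul_inv, mul_comm, inv_pow]
      _ ≤ ε⁻¹ ^ p * ε⁻¹ := by
        have := hε.1
        gcongr
      _ = ε⁻¹ ^ (p + 1) := (pow_succ _ _).symm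
  have hsum := SmoothModerate.sum Finset.univ fun i _ =>
    (hcomp i).clm_comp (ContinuousLinearMap.single ℝ (fun _ : Fin n => ℝ) i)
  have heq : (fun ε x => ∑ i, ContinuousLinearMap.single ℝ (fun _ : Fin n => ℝ) i (u ε x i)) = u := by
    funext ε x
    simpa using Finset.univ_sum_single (u ε x)
  rwa [heq] at hsum

end Moderate

theorem CBoundedMap.comp {X Y Z : Type*} [TopologicalSpace X] [TopologicalSpace Y]
    [TopologicalSpace Z] {g : ℝ → Y → Z} {f : ℝ → X → Y} (hg : CBoundedMap g)
    (hf : CBoundedMap f) : CBoundedMap fun ε x => g ε (f ε x) := by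
  intro K hK
  obtain ⟨ε₁, h₁, K₁, hK₁, hf'⟩ := hf K hK
  obtain ⟨ε₂, h₂, K₂, hK₂, hg'⟩ := hg K₁ hK₁
  exact ⟨min ε₁ ε₂, lt_min h₁ h₂, K₂, hK₂, fun ε h0 hε x hx =>
    hg' ε h0 (hε.trans_le (min_le_right _ _)) _
      (hf' ε h0 (hε.trans_le (min_le_left _ _)) x hx)⟩

theorem CBoundedMap.idProd {X Y Z : Type*} [TopologicalSpace X] [TopologicalSpace Y]
    [TopologicalSpace Z] {f : ℝ → X → Y} (hf : CBoundedMap f) :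
    CBoundedMap fun ε (p : Z × X) => (p.1, f ε p.2) := by
  intro K hK
  obtain ⟨ε₁, h₁, K₁, hK₁, hf'⟩ := hf _ (hK.image continuous_snd)
  exact ⟨ε₁, h₁, _, (hK.image continuous_fst).prod hK₁, fun ε h0 hε p hp =>
    ⟨mem_image_of_mem _ hp, hf' ε h0 hε _ (mem_image_of_mem _ hp)⟩⟩

theorem cBoundedMap_const {X Y : Type*} [TopologicalSpace X] [TopologicalSpace Y] {f : X → Y}
    (hf : Continuous f) : CBoundedMap fun _ => f := fun _ hK =>
  ⟨1, one_pos, _, hK.image hf, fun _ _ _ _ hx => mem_image_of_mem _ hx⟩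

/-! ### The pullback of a flow -/

/-- the pullback of a strictly 𝒢-complete generalized group action under
a generalized diffeomorphism is a strictly 𝒢-complete generalized group action whose
generator is the pullback `ψ_ε^*ξ_ε = (Dψ_ε)^{-1}·(ξ_ε ∘ ψ_ε)` (here written as
`Dψ_ε^{-1}(ψ_ε x)·ξ_ε(ψ_ε x)`) of the generator: the pulled-back vector fields are
smooth and complete with flows `(η,x) ↦ ψ_ε^{-1}(Φ_ε(η, ψ_ε x))`, these flows form a
c-bounded moderate net, and the pulled-back vector fields form a moderate net. -/
theorem stmt17 {m : ℕ}
    (ψ ψinv : ℝ → (Fin m → ℝ) → (Fin m → ℝ))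
    (hψs : ∀ ε ∈ Set.Ioc (0:ℝ) 1, ContDiff ℝ (⊤ : ℕ∞) (ψ ε) ∧ ContDiff ℝ (⊤ : ℕ∞) (ψinv ε) ∧
      Function.LeftInverse (ψinv ε) (ψ ε) ∧ Function.RightInverse (ψinv ε) (ψ ε))
    (hψcb : CBoundedMap ψ) (hψinvcb : CBoundedMap ψinv)
    (hψmod : ModerateV ψ) (hψinvmod : ModerateV ψinv)
    (ξ : ℝ → (Fin m → ℝ) → (Fin m → ℝ))
    (hξs : ∀ ε ∈ Set.Ioc (0:ℝ) 1, ContDiff ℝ (⊤ : ℕ∞) (ξ ε)) (hξmod : ModerateV ξ)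
    (Φ : ℝ → (ℝ × (Fin m → ℝ)) → (Fin m → ℝ))
    (hflow0 : ∀ ε ∈ Set.Ioc (0:ℝ) 1, ∀ x : Fin m → ℝ, Φ ε (0, x) = x)
    (hflow : ∀ ε ∈ Set.Ioc (0:ℝ) 1, ∀ (t : ℝ) (x : Fin m → ℝ),
      HasDerivAt (fun s => Φ ε (s, x)) (ξ ε (Φ ε (t, x))) t)
    (hΦcb : CBoundedMap Φ) (hΦmod : ModerateV Φ) :
    (∀ ε ∈ Set.Ioc (0:ℝ) 1,
      ContDiff ℝ (⊤ : ℕ∞) (fun x => fderiv ℝ (ψinv ε) (ψ ε x) (ξ ε (ψ ε x)))) ∧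
    (∀ ε ∈ Set.Ioc (0:ℝ) 1, ∀ x : Fin m → ℝ, ψinv ε (Φ ε (0, ψ ε x)) = x) ∧
    (∀ ε ∈ Set.Ioc (0:ℝ) 1, ∀ (t : ℝ) (x : Fin m → ℝ),
      HasDerivAt (fun s => ψinv ε (Φ ε (s, ψ ε x)))
        ((fun y => fderiv ℝ (ψinv ε) (ψ ε y) (ξ ε (ψ ε y)))
          (ψinv ε (Φ ε (t, ψ ε x)))) t) ∧
    CBoundedMap (fun ε (p : ℝ × (Fin m → ℝ)) => ψinv ε (Φ ε (p.1, ψ ε p.2))) ∧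
    ModerateV (fun ε (p : ℝ × (Fin m → ℝ)) => ψinv ε (Φ ε (p.1, ψ ε p.2))) ∧
    ModerateV (fun ε x => fderiv ℝ (ψinv ε) (ψ ε x) (ξ ε (ψ ε x))) := by
  have hΦs : ∀ ε ∈ Set.Ioc (0:ℝ) 1, ContDiff ℝ (⊤ : ℕ∞) (Φ ε) := fun ε hε =>
    flow_contDiff (hξs ε hε) (hflow0 ε hε) (hflow ε hε)
  have mψ := hψmod.smoothModerate fun ε hε => (hψs ε hε).1
  have mψinv := hψinvmod.smoothModerate fun ε hε => (hψs ε hε).2.1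
  have mξ := hξmod.smoothModerate hξs
  have mΦ := hΦmod.smoothModerate hΦs
  -- The inner net `(t, x) ↦ (t, ψ_ε x)` of the conjugated flow.
  have minner : SmoothModerate fun ε (p : ℝ × (Fin m → ℝ)) => (p.1, ψ ε p.2) := by
    have h1 := smoothModerate_const
      ((ContinuousLinearMap.inl ℝ ℝ (Fin m → ℝ)).contDiff.comp
        (contDiff_fst (𝕜 := ℝ) (E := ℝ) (F := Fin m → ℝ) (n := (⊤ : ℕ∞))))
    have h2 := (mψ.comp (smoothModerate_const
      (contDiff_snd (𝕜 := ℝ) (E := ℝ) (F := Fin m → ℝ) (n := (⊤ : ℕ∞))))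
      (cBoundedMap_const continuous_snd)).clm_comp (ContinuousLinearMap.inr ℝ ℝ (Fin m → ℝ))
    simpa using h1.add h2
  have hinner : CBoundedMap fun ε (p : ℝ × (Fin m → ℝ)) => (p.1, ψ ε p.2) := hψcb.idProd
  refine ⟨fun ε hε => ?_, fun ε hε x => ?_, fun ε hε t x => ?_,
    hψinvcb.comp (hΦcb.comp hinner), ?_, ?_⟩
  · obtain ⟨h1, h2, -, -⟩ := hψs ε hε
    have hd : ContDiff ℝ (⊤ : ℕ∞) (fderiv ℝ (ψinv ε)) := h2.fderiv_right (by simp)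
    exact (hd.comp h1).clm_apply ((hξs ε hε).comp h1)
  · rw [hflow0 ε hε]
    exact (hψs ε hε).2.2.1 x
  · obtain ⟨-, h2, -, hr⟩ := hψs ε hε
    have hd : HasFDerivAt (ψinv ε) (fderiv ℝ (ψinv ε) (Φ ε (t, ψ ε x))) (Φ ε (t, ψ ε x)) :=
      (h2.differentiable (by simp) _).hasFDerivAt
    have := hd.comp_hasDerivAt t (hflow ε hε t (ψ ε x))
    beta_reduce
    rw [hr]
    exact this
  · exact (mψinv.comp (mΦ.comp minner hinner) (hΦcb.comp hinner)).moderateV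
  · exact ((mψinv.fderiv.comp mψ hψcb).clm_apply (mξ.comp mψ hψcb)).moderateV
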